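/- Let s > 11/2 and suppose (ξ_k)_{k≥1} satisfies Σ_{k≥1} ‖ξ_k‖_{H^σ} < ∞ for every σ ≥ 0. For X = (u,η) ∈ H^s(𝕋) × H^{s-1}(𝕋), set h^k(X) = (−(1−∂²_x)^{-1} 𝓛_{ξ_k} (1−∂²_x) u, −𝓛_{ξ_k} η), and for ε ∈ (0,1) let T̃_ε = (1 − ε²∂²_x)^{-1} act componentwise. Then there is a constant C > 0, independent of ε, such that for all X: Σ_{k=1}^∞ |(T̃_ε h^k(X), T̃_ε X)_{H^s×H^{s-1}}|² ≤ C (‖u‖²_{H^s} + ‖η‖²_{H^{s-1}}) ‖T̃_ε X‖²_{H^s×H^{s-1}}. -/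

import Mathlib

noncomputable section
open scoped BigOperators

/-- A (complex-valued) function on the torus `𝕋 = ℝ/2πℤ`, represented by its sequence of
Fourier coefficients `f̂ : ℤ → ℂ`. -/
abbrev FC := ℤ → ℂ

namespace FC

/-- The Sobolev weight `(1+k²)^s`. -/
def wt (s : ℝ) (k : ℤ) : ℝ := (1 + (k : ℝ) ^ 2) ^ s

/-- `c` represents a function belonging to the Sobolev space `H^s(𝕋)`. -/
def memHs (s : ℝ) (c : FC) : Prop := Summable fun k : ℤ => wt s k * ‖c k‖ ^ 2

/-- The `H^s(𝕋)` norm: `‖f‖²_{H^s} = Σ_{k∈ℤ} (1+k²)^s |f̂(k)|²`. -/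
def hsNorm (s : ℝ) (c : FC) : ℝ := Real.sqrt (∑' k : ℤ, wt s k * ‖c k‖ ^ 2)

/-- The `H^s(𝕋)` inner product `(f,g)_{H^s} = Σ_{k∈ℤ} (1+k²)^s f̂(k) conj(ĝ(k))`
(its real part; the sum is real for real-valued functions). -/
def hsInner (s : ℝ) (c d : FC) : ℝ :=
  (∑' k : ℤ, ((wt s k : ℂ) * (c k * (starRingEnd ℂ) (d k)))).re

/-- `c` represents a real-valued function (conjugate-symmetric coefficients). -/
def isReal (c : FC) : Prop := ∀ k : ℤ, c (-k) = (starRingEnd ℂ) (c k)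

/-- The derivative `∂ₓ`, i.e. the Fourier multiplier `ik`. -/
def D1 (c : FC) : FC := fun k => Complex.I * (k : ℂ) * c k

/-- The pointwise product of functions, i.e. convolution of Fourier coefficients. -/
def mul (c d : FC) : FC := fun k => ∑' j : ℤ, c j * d (k - j)

/-- The represented function, evaluated at `x ∈ ℝ`. -/
def eval (c : FC) (x : ℝ) : ℂ := ∑' k : ℤ, c k * Complex.exp (Complex.I * (k : ℂ) * (x : ℂ))

/-- The `L^∞` norm (supremum of the represented periodic function over ℝ). -/
def linfty (c : FC) : ℝ := ⨆ x : ℝ, ‖eval c x‖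

/-- The `W^{1,∞}` norm. -/
def w1infty (c : FC) : ℝ := linfty c + linfty (D1 c)

/-- A Fourier multiplier operator with real symbol `m`. -/
def mult (m : ℤ → ℝ) (c : FC) : FC := fun k => (m k : ℂ) * c k

/-- The operator `(1-∂ₓ²)⁻¹`, i.e. the Fourier multiplier `(1+k²)⁻¹`. -/
def helmInv : FC → FC := mult fun k => (1 + (k : ℝ) ^ 2)⁻¹

/-- The operator `1-∂ₓ²`, i.e. the Fourier multiplier `1+k²`. -/
def helm : FC → FC := mult fun k => 1 + (k : ℝ) ^ 2

/-- The operator `T̃_ε = (1-ε²∂ₓ²)⁻¹`, i.e. the Fourier multiplier `(1+ε²k²)⁻¹`. -/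
def T (ε : ℝ) : FC → FC := mult fun k => (1 + ε ^ 2 * (k : ℝ) ^ 2)⁻¹

/-- The periodic Hilbert transform, i.e. the Fourier multiplier `-i·sgn(k)`. -/
def hilbert (c : FC) : FC := fun k => -Complex.I * (Int.sign k : ℂ) * c k

/-- The Friedrichs-type mollifier `J_ε`, the Fourier multiplier `ĵ(εk)`. -/
def Jmol (jhat : ℝ → ℝ) (ε : ℝ) : FC → FC := mult fun k => jhat (ε * (k : ℝ))

/-- The generalized Lie derivative `𝓛_ξ f = ξ ∂ₓ f + (∂ₓ ξ) f`. -/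
def lie (ξ c : FC) : FC := mul ξ (D1 c) + mul (D1 ξ) c

/-- `𝓛²_ξ f = 𝓛_ξ (𝓛_ξ f)`. -/
def lie2 (ξ c : FC) : FC := lie ξ (lie ξ c)

/-- The coefficientwise sum `Σ_{k∈ℕ} F k` of a sequence of functions. -/
def tsumFC (F : ℕ → FC) : FC := fun m => ∑' k : ℕ, F k m

/-- The norm on the product space `H^{s₁}×H^{s₂}`. -/
def pairNorm (s₁ s₂ : ℝ) (c d : FC) : ℝ := Real.sqrt (hsNorm s₁ c ^ 2 + hsNorm s₂ d ^ 2)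

/-- The inner product on the product space `H^{s₁}×H^{s₂}`:
`((c₁,d₁),(c₂,d₂)) ↦ (c₁,c₂)_{H^{s₁}} + (d₁,d₂)_{H^{s₂}}`. -/
def pairInner (s₁ s₂ : ℝ) (c₁ d₁ c₂ d₂ : FC) : ℝ := hsInner s₁ c₁ c₂ + hsInner s₂ d₁ d₂

end FC

/-- First component of the singular drift of the stochastic two-component CH system:
`−u ∂ₓ u + ½ (1−∂ₓ²)⁻¹ Σ_k 𝓛²_{ξ_k} (1−∂ₓ²) u`. -/
def gCH1 (ξ : ℕ → FC) (u : FC) : FC :=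
  -(FC.mul u (FC.D1 u)) +
    (1 / 2 : ℝ) • FC.helmInv (FC.tsumFC fun k => FC.lie2 (ξ k) (FC.helm u))

/-- Second component of the singular drift of the stochastic two-component CH system:
`−u ∂ₓ η + ½ Σ_k 𝓛²_{ξ_k} η`. -/
def gCH2 (ξ : ℕ → FC) (u η : FC) : FC :=
  -(FC.mul u (FC.D1 η)) + (1 / 2 : ℝ) • FC.tsumFC fun k => FC.lie2 (ξ k) η

/-- First component of the diffusion coefficient `h^k`:
`−(1−∂ₓ²)⁻¹ 𝓛_{ξ_k} (1−∂ₓ²) u`. -/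
def hCH1 (ξ : ℕ → FC) (k : ℕ) (u : FC) : FC :=
  -(FC.helmInv (FC.lie (ξ k) (FC.helm u)))

/-- Second component of the diffusion coefficient `h^k`: `−𝓛_{ξ_k} η`. -/
def hCH2 (ξ : ℕ → FC) (k : ℕ) (η : FC) : FC := -(FC.lie (ξ k) η)

/-!
In Fourier modes, `(T ε (lie ξ v), T ε v)_{H^q}` is the real part of
`Σ_{k,j} i φ(k) ξ̂(j) v̂(k-j) conj v̂(k)` with `φ(k) = k (1+k²)^q (1+ε²k²)⁻²`. As `ξ` is real,
taking the conjugate and exchanging `k` with `k - j` shows that twice this real part is the same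
sum with `φ(k) - φ(k-j)` in place of `φ(k)`. By the mean value theorem and Peetre's inequality,
this increment is bounded, uniformly in `ε`, by a power of `1 + j²` times
`(1+(k-j)²)^{q/2} (1+k²)^{q/2} (1+ε²k²)⁻¹`: no derivative is lost, and one mollifier stays on
`v̂(k)`. Young's inequality then gives
`|(T ε (lie ξ v), T ε v)_{H^q}| ≤ C ‖ξ‖_{H^σ} ‖v‖_{H^q} ‖T ε v‖_{H^q}` for large `σ`. The multiplier
`1 - ∂ₓ²` turns the first component of `h^k` into this estimate for `q = s - 2`, the second
component is the case `q = s - 1`, and the squares of the bounds are summable in `k`.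
-/

namespace FC

section Weights

/-- The Sobolev weight `(1 + x²)^q` at a real frequency `x`. It extends `FC.wt` from `ℤ` to `ℝ`, so
that the mean value inequality applies to symbols; `T ε` has symbol `bracket (-1) (ε x)`. -/
def bracket (q x : ℝ) : ℝ := (1 + x ^ 2) ^ q

variable (q r x : ℝ)

lemma wt_eq_bracket (k : ℤ) : wt q k = bracket q k := rfl

lemma bracket_pos : 0 < bracket q x := Real.rpow_pos_of_pos (by positivity) _

lemma bracket_nonneg : 0 ≤ bracket q x := (bracket_pos q x).le

lemma bracket_zero : bracket 0 x = 1 := Real.rpow_zero _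

lemma bracket_one : bracket 1 x = 1 + x ^ 2 := Real.rpow_one _

lemma bracket_neg_one : bracket (-1) x = (1 + x ^ 2)⁻¹ := Real.rpow_neg_one _

lemma bracket_add : bracket (q + r) x = bracket q x * bracket r x :=
  Real.rpow_add (by positivity) _ _

lemma bracket_half_sq : bracket (q / 2) x ^ 2 = bracket q x := by
  rw [sq, ← bracket_add, add_halves]

lemma bracket_neg_mul_self : bracket (-q) x * bracket q x = 1 := by
  rw [← bracket_add, neg_add_cancel, bracket_zero]

variable {q r}

lemma bracket_le_bracket (h : q ≤ r) : bracket q x ≤ bracket r x :=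
  Real.rpow_le_rpow_of_exponent_le (by nlinarith [sq_nonneg x]) h

lemma bracket_le_one (hq : q ≤ 0) : bracket q x ≤ 1 :=
  (bracket_le_bracket x hq).trans_eq (bracket_zero x)

lemma abs_le_bracket_half : |x| ≤ bracket (1 / 2) x := by
  rw [bracket, ← Real.sqrt_eq_rpow]
  exact Real.abs_le_sqrt (by linarith)

lemma bracket_le_of_abs_sub_le_of_nonneg {x y z : ℝ} (hq : 0 ≤ q) (h : |x - y| ≤ |z|) :
    bracket q x ≤ 2 ^ q * (bracket q y * bracket q z) := by
  have hxyz : 1 + x ^ 2 ≤ 2 * ((1 + y ^ 2) * (1 + z ^ 2)) := by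
    nlinarith [sq_le_sq.mpr h, sq_nonneg (x - 2 * y), sq_nonneg (y * z)]
  calc bracket q x ≤ (2 * ((1 + y ^ 2) * (1 + z ^ 2))) ^ q :=
        Real.rpow_le_rpow (by positivity) hxyz hq
    _ = 2 ^ q * (bracket q y * bracket q z) := by
        rw [Real.mul_rpow (by positivity) (by positivity),
          Real.mul_rpow (by positivity) (by positivity), bracket, bracket]

/-- Peetre's inequality. -/
lemma bracket_le_of_abs_sub_le (q : ℝ) {x y z : ℝ} (h : |x - y| ≤ |z|) :
    bracket q x ≤ 2 ^ |q| * (bracket q y * bracket |q| z) := by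
  obtain hq | hq := le_total 0 q
  · simpa only [abs_of_nonneg hq] using bracket_le_of_abs_sub_le_of_nonneg hq h
  have hyx := bracket_le_of_abs_sub_le_of_nonneg (neg_nonneg.mpr hq) (abs_sub_comm x y ▸ h)
  rw [abs_of_nonpos hq]
  calc bracket q x = bracket q x * bracket q y * bracket (-q) y := by
        rw [mul_assoc, mul_comm (bracket q y), bracket_neg_mul_self, mul_one]
    _ ≤ bracket q x * bracket q y * (2 ^ (-q) * (bracket (-q) x * bracket (-q) z)) :=
        mul_le_mul_of_nonneg_left hyx (mul_nonneg (bracket_nonneg _ _) (bracket_nonneg _ _))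
    _ = bracket (-q) x * bracket q x * (2 ^ (-q) * (bracket q y * bracket (-q) z)) := by ring
    _ = 2 ^ (-q) * (bracket q y * bracket (-q) z) := by rw [bracket_neg_mul_self, one_mul]

lemma bracket_neg_one_mul_le {ε x y z : ℝ} (hε : |ε| ≤ 1) (h : |x - y| ≤ |z|) :
    bracket (-1) (ε * x) ≤ 2 * (bracket (-1) (ε * y) * bracket 1 z) := by
  have hεz : |ε * x - ε * y| ≤ |z| := by
    rw [← mul_sub, abs_mul]
    exact (mul_le_of_le_one_left (abs_nonneg _) hε).trans h
  simpa using bracket_le_of_abs_sub_le (-1) hεz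

lemma hasDerivAt_bracket (q x : ℝ) :
    HasDerivAt (bracket q) (2 * q * x * bracket (q - 1) x) x := by
  have hsq : HasDerivAt (fun x : ℝ => 1 + x ^ 2) (2 * x) x := by
    simpa using (hasDerivAt_pow 2 x).const_add 1
  refine (hsq.rpow_const (p := q) (Or.inl (by positivity))).congr_deriv ?_
  rw [bracket]
  ring

lemma abs_mul_deriv_bracket_le (q x : ℝ) :
    |x * (2 * q * x * bracket (q - 1) x)| ≤ 2 * |q| * bracket q x := by
  have hx : x ^ 2 * bracket (-1) x ≤ 1 := by
    rw [bracket_neg_one, ← div_eq_mul_inv, div_le_one (by positivity)]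
    linarith
  have h0 : 0 ≤ x ^ 2 * bracket (-1) x := mul_nonneg (sq_nonneg x) (bracket_nonneg _ _)
  calc |x * (2 * q * x * bracket (q - 1) x)|
      = |2 * q * bracket q x * (x ^ 2 * bracket (-1) x)| := by
        rw [sub_eq_add_neg, bracket_add]
        ring_nf
    _ = 2 * |q| * bracket q x * (x ^ 2 * bracket (-1) x) := by
        rw [abs_mul, abs_mul, abs_mul, abs_two, abs_of_pos (bracket_pos q x), abs_of_nonneg h0]
    _ ≤ 2 * |q| * bracket q x :=
        mul_le_of_le_one_right (mul_nonneg (by positivity) (bracket_nonneg _ _)) hx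

lemma summable_bracket_int (hq : q < -(1 / 2)) : Summable fun k : ℤ => bracket q k := by
  refine Summable.of_norm_bounded_eventually
    (Real.summable_abs_int_rpow (b := -(2 * q)) (by linarith)) ?_
  filter_upwards [(Set.finite_singleton (0 : ℤ)).compl_mem_cofinite] with k hk
  have hk0 : 0 < |(k : ℝ)| := abs_pos.mpr (Int.cast_ne_zero.mpr hk)
  rw [Real.norm_of_nonneg (bracket_nonneg _ _), neg_neg, Real.rpow_mul hk0.le, Real.rpow_two]
  exact Real.rpow_le_rpow_of_nonpos (by positivity) (by rw [sq_abs]; linarith) (by linarith)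

end Weights

section EnergySymbol

/-- The symbol `x (1 + x²)^q (1 + ε²x²)⁻²` of the energy `(T ε f', T ε g)_{H^q}`, up to the factor
`i`. -/
def energySymbol (q ε x : ℝ) : ℝ := x * (bracket q x * bracket (-2) (ε * x))

lemma hasDerivAt_energySymbol (q ε x : ℝ) :
    HasDerivAt (energySymbol q ε)
      (bracket q x * bracket (-2) (ε * x)
        + x * (2 * q * x * bracket (q - 1) x) * bracket (-2) (ε * x)
        + bracket q x * (ε * x * (2 * -2 * (ε * x) * bracket (-2 - 1) (ε * x)))) x := by
  have hε : HasDerivAt (fun x => bracket (-2) (ε * x))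
      (2 * -2 * (ε * x) * bracket (-2 - 1) (ε * x) * ε) x := by
    simpa [Function.comp_def] using
      (hasDerivAt_bracket (-2) (ε * x)).comp x ((hasDerivAt_id x).const_mul ε)
  refine ((hasDerivAt_id x).mul ((hasDerivAt_bracket q x).mul hε)).congr_deriv ?_
  simp only [id, Pi.mul_apply]
  ring

lemma norm_deriv_energySymbol_le (q ε x : ℝ) :
    ‖deriv (energySymbol q ε) x‖ ≤ (5 + 2 * |q|) * (bracket q x * bracket (-2) (ε * x)) := by
  have hW := bracket_nonneg q x
  have hT := bracket_nonneg (-2) (ε * x)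
  rw [(hasDerivAt_energySymbol q ε x).deriv, Real.norm_eq_abs]
  refine (abs_add_three _ _ _).trans ?_
  rw [abs_of_nonneg (mul_nonneg hW hT), abs_mul _ (bracket (-2) (ε * x)),
    abs_mul (bracket q x) (ε * x * _), abs_of_nonneg hW, abs_of_nonneg hT]
  have hq := mul_le_mul_of_nonneg_right (abs_mul_deriv_bracket_le q x) hT
  have hε := mul_le_mul_of_nonneg_left (abs_mul_deriv_bracket_le (-2) (ε * x)) hW
  rw [abs_neg, abs_two] at hε
  linarith

/-- Half of the weight of an intermediate frequency `x` is moved to `k` and half to `l`, but both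
mollifiers are moved to `k` alone: one of them is simply dropped. -/
lemma bracket_mul_bracket_neg_two_le {q ε k l x : ℝ} (hε : |ε| ≤ 1) (hx : x ∈ Set.uIcc l k) :
    bracket q x * bracket (-2) (ε * x) ≤ 2 * 2 ^ |q| *
      (bracket (|q| + 1) (k - l) * bracket (q / 2) l
        * (bracket (q / 2) k * bracket (-1) (ε * k))) := by
  have hxl : |x - l| ≤ |k - l| := Set.abs_sub_left_of_mem_uIcc hx
  have hxk : |x - k| ≤ |k - l| := by
    rw [abs_sub_comm]
    exact Set.abs_sub_right_of_mem_uIcc hx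
  have hweight : bracket q x ≤ 2 ^ |q| *
      (bracket |q| (k - l) * bracket (q / 2) l * bracket (q / 2) k) := by
    have h2 : (0 : ℝ) ≤ 2 ^ |q / 2| := by positivity
    calc bracket q x = bracket (q / 2) x * bracket (q / 2) x := by
          rw [← sq, bracket_half_sq]
      _ ≤ 2 ^ |q / 2| * (bracket (q / 2) l * bracket |q / 2| (k - l)) *
            (2 ^ |q / 2| * (bracket (q / 2) k * bracket |q / 2| (k - l))) :=
          mul_le_mul (bracket_le_of_abs_sub_le _ hxl) (bracket_le_of_abs_sub_le _ hxk)
            (bracket_nonneg _ _)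
            (mul_nonneg h2 (mul_nonneg (bracket_nonneg _ _) (bracket_nonneg _ _)))
      _ = 2 ^ |q / 2| * 2 ^ |q / 2| * (bracket |q / 2| (k - l) * bracket |q / 2| (k - l)
            * bracket (q / 2) l * bracket (q / 2) k) := by ring
      _ = _ := by
          rw [← Real.rpow_add two_pos, ← bracket_add, abs_div, abs_two, add_halves]
  have hmollifier : bracket (-2) (ε * x) ≤ 2 * (bracket (-1) (ε * k) * bracket 1 (k - l)) :=
    (bracket_le_bracket _ (by norm_num)).trans (bracket_neg_one_mul_le hε hxk)
  refine (mul_le_mul hweight hmollifier (bracket_nonneg _ _) ((bracket_nonneg _ _).trans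
    hweight)).trans_eq ?_
  rw [bracket_add]
  ring

lemma abs_energySymbol_sub_le {q ε : ℝ} (hε : |ε| ≤ 1) (k l : ℝ) :
    |energySymbol q ε k - energySymbol q ε l| ≤ (5 + 2 * |q|) * (2 * 2 ^ |q|) *
      (bracket (|q| + 3 / 2) (k - l) * bracket (q / 2) l
        * (bracket (q / 2) k * bracket (-1) (ε * k))) := by
  set B := bracket (|q| + 1) (k - l) * bracket (q / 2) l
    * (bracket (q / 2) k * bracket (-1) (ε * k)) with hB
  have hderiv : ∀ x ∈ Set.uIcc l k,
      ‖deriv (energySymbol q ε) x‖ ≤ (5 + 2 * |q|) * (2 * 2 ^ |q| * B) := fun x hx =>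
    (norm_deriv_energySymbol_le q ε x).trans
      (mul_le_mul_of_nonneg_left (bracket_mul_bracket_neg_two_le hε hx) (by positivity))
  calc |energySymbol q ε k - energySymbol q ε l|
      ≤ (5 + 2 * |q|) * (2 * 2 ^ |q| * B) * |k - l| :=
        (convex_uIcc l k).norm_image_sub_le_of_norm_deriv_le
          (fun x _ => (hasDerivAt_energySymbol q ε x).differentiableAt) hderiv
          Set.left_mem_uIcc Set.right_mem_uIcc
    _ ≤ (5 + 2 * |q|) * (2 * 2 ^ |q| * B) * bracket (1 / 2) (k - l) :=
        mul_le_mul_of_nonneg_left (abs_le_bracket_half _)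
          ((norm_nonneg _).trans (hderiv k Set.right_mem_uIcc))
    _ = _ := by
        rw [hB, show |q| + 3 / 2 = |q| + 1 + 1 / 2 by ring, bracket_add _ (1 / 2)]
        ring

/-- This bound blows up as `ε → 0`; it only serves to justify rearranging the double series. -/
lemma abs_energySymbol_le {q ε : ℝ} (hε : 0 < ε) (k l : ℝ) :
    |energySymbol q ε k| ≤ ε⁻¹ * 2 ^ |q / 2| *
      (bracket (|q| + 3 / 2) (k - l) * bracket (q / 2) l
        * (bracket (q / 2) k * bracket (-1) (ε * k))) := by
  have hk := mul_nonneg (bracket_nonneg (q / 2) k) (bracket_nonneg (-1) (ε * k))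
  have hfreq : |k| * bracket (-1) (ε * k) ≤ ε⁻¹ := by
    have hεk : |ε * k| ≤ bracket 1 (ε * k) :=
      (abs_le_bracket_half _).trans (bracket_le_bracket _ (by norm_num))
    rw [← mul_le_mul_iff_right₀ hε, mul_inv_cancel₀ hε.ne']
    calc ε * (|k| * bracket (-1) (ε * k)) = bracket (-1) (ε * k) * |ε * k| := by
          rw [abs_mul, abs_of_pos hε]
          ring
      _ ≤ bracket (-1) (ε * k) * bracket 1 (ε * k) :=
          mul_le_mul_of_nonneg_left hεk (bracket_nonneg _ _)
      _ = 1 := bracket_neg_mul_self _ _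
  have hweight : bracket (q / 2) k ≤
      2 ^ |q / 2| * (bracket (q / 2) l * bracket (|q| + 3 / 2) (k - l)) := by
    refine (bracket_le_of_abs_sub_le _ le_rfl).trans (mul_le_mul_of_nonneg_left
      (mul_le_mul_of_nonneg_left (bracket_le_bracket _ ?_) (bracket_nonneg _ _)) (by positivity))
    rw [abs_div, abs_two]
    linarith [abs_nonneg q]
  calc |energySymbol q ε k|
      = |k| * bracket (-1) (ε * k) * bracket (q / 2) k
          * (bracket (q / 2) k * bracket (-1) (ε * k)) := by
        rw [energySymbol, abs_mul, abs_of_nonneg (mul_nonneg (bracket_nonneg _ _)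
          (bracket_nonneg _ _)), ← bracket_half_sq q, show (-2 : ℝ) = -1 + -1 by norm_num,
          bracket_add]
        ring
    _ ≤ ε⁻¹ * (2 ^ |q / 2| * (bracket (q / 2) l * bracket (|q| + 3 / 2) (k - l)))
          * (bracket (q / 2) k * bracket (-1) (ε * k)) :=
        mul_le_mul_of_nonneg_right
          (mul_le_mul hfreq hweight (bracket_nonneg _ _) (inv_nonneg.mpr hε.le)) hk
    _ = _ := by ring

end EnergySymbol

section Sums

lemma summable_sq_of_summable_of_nonneg {ι : Type*} {f : ι → ℝ} (hf : Summable f)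
    (hf₀ : 0 ≤ f) : Summable fun i => f i ^ 2 := by
  simp only [sq]
  exact (hf.mul_of_nonneg hf hf₀ hf₀).comp_injective
    (i := fun i => (i, i)) fun _ _ h => (Prod.mk.inj h).1

lemma summable_mul_and_tsum_mul_le_sqrt_mul_sqrt {ι : Type*} {f g : ι → ℝ}
    (hf₀ : 0 ≤ f) (hg₀ : 0 ≤ g)
    (hf : Summable fun i => f i ^ 2) (hg : Summable fun i => g i ^ 2) :
    (Summable fun i => f i * g i) ∧
      ∑' i, f i * g i ≤ √(∑' i, f i ^ 2) * √(∑' i, g i ^ 2) := by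
  simpa [Real.sqrt_eq_rpow] using
    Real.summable_and_inner_le_Lp_mul_Lq_tsum_of_nonneg Real.HolderConjugate.two_two hf₀ hg₀
      (by simpa using hf) (by simpa using hg)

/-- The trilinear form of Young's inequality `ℓ¹ * ℓ² ⊆ ℓ²`. -/
lemma summable_and_tsum_mul_shift_mul_le {G : Type*} [AddGroup G] {e f g : G → ℝ}
    (he₀ : 0 ≤ e) (hf₀ : 0 ≤ f) (hg₀ : 0 ≤ g) (he : Summable e)
    (hf : Summable fun i => f i ^ 2) (hg : Summable fun i => g i ^ 2) :
    (Summable fun p : G × G => e p.2 * (f (p.1 - p.2) * g p.1)) ∧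
      ∑' p : G × G, e p.2 * (f (p.1 - p.2) * g p.1) ≤
        (∑' i, e i) * (√(∑' i, f i ^ 2) * √(∑' i, g i ^ 2)) := by
  set A := √(∑' i, f i ^ 2) * √(∑' i, g i ^ 2)
  set F : G × G → ℝ := fun p => e p.1 * (f (p.2 - p.1) * g p.2)
  have hF₀ : 0 ≤ F := fun p => mul_nonneg (he₀ _) (mul_nonneg (hf₀ _) (hg₀ _))
  have hshift (j : G) :
      (Summable fun k => f (k - j) * g k) ∧ ∑' k, f (k - j) * g k ≤ A := by
    have hfj : Summable fun k => f (k - j) ^ 2 := (Equiv.subRight j).summable_iff.mpr hf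
    have htsum : ∑' k, f (k - j) ^ 2 = ∑' k, f k ^ 2 :=
      (Equiv.subRight j).tsum_eq fun i => f i ^ 2
    have h := summable_mul_and_tsum_mul_le_sqrt_mul_sqrt (fun k => hf₀ (k - j)) hg₀ hfj hg
    rwa [htsum] at h
  have hrow (j : G) : ∑' k, F (j, k) ≤ e j * A :=
    tsum_mul_left.trans_le (mul_le_mul_of_nonneg_left (hshift j).2 (he₀ j))
  have hFs : Summable F := (summable_prod_of_nonneg hF₀).mpr
    ⟨fun j => (hshift j).1.mul_left (e j),
      (he.mul_right A).of_nonneg_of_le (fun j => tsum_nonneg fun k => hF₀ (j, k)) hrow⟩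
  refine ⟨(Equiv.prodComm G G).summable_iff.mpr hFs, ?_⟩
  calc ∑' p : G × G, e p.2 * (f (p.1 - p.2) * g p.1) = ∑' p, F p :=
        (Equiv.prodComm G G).tsum_eq F
    _ = ∑' j, ∑' k, F (j, k) := hFs.tsum_prod
    _ ≤ ∑' j, e j * A := hFs.prod.tsum_le_tsum hrow (he.mul_right A)
    _ = (∑' i, e i) * A := tsum_mul_right

end Sums

section SobolevSpaces

variable {q r : ℝ} {c : FC}

lemma hsNorm_nonneg (s : ℝ) (c : FC) : 0 ≤ hsNorm s c := Real.sqrt_nonneg _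

lemma sq_bracket_half_mul_norm (s : ℝ) (c : FC) (k : ℤ) :
    (bracket (s / 2) k * ‖c k‖) ^ 2 = wt s k * ‖c k‖ ^ 2 := by
  rw [mul_pow, bracket_half_sq, wt_eq_bracket]

lemma norm_le_hsNorm_mul_bracket (hc : memHs q c) (k : ℤ) :
    ‖c k‖ ≤ hsNorm q c * bracket (|q| / 2) k := by
  have hk : bracket (q / 2) k * ‖c k‖ ≤ hsNorm q c :=
    Real.le_sqrt_of_sq_le <| (sq_bracket_half_mul_norm q c k).trans_le <|
      hc.le_tsum k fun j _ => mul_nonneg (bracket_nonneg _ _) (sq_nonneg _)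
  calc ‖c k‖ = bracket (-(q / 2)) k * (bracket (q / 2) k * ‖c k‖) := by
        rw [← mul_assoc, bracket_neg_mul_self, one_mul]
    _ ≤ bracket (|q| / 2) k * hsNorm q c :=
        mul_le_mul (bracket_le_bracket _ (by linarith [neg_abs_le q])) hk
          (mul_nonneg (bracket_nonneg _ _) (norm_nonneg _)) (bracket_nonneg _ _)
    _ = _ := mul_comm _ _

/-- The weighted Wiener norm `Σ_k (1+k²)^p |f̂(k)|`, whose finiteness is expressed by the
summability of its terms. The energy estimate depends on the vector field `ξ` only through
this norm. -/
def wienerNorm (p : ℝ) (c : FC) : ℝ := ∑' k : ℤ, bracket p k * ‖c k‖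

lemma summable_and_wienerNorm_le (hq : 2 * q + 1 / 2 < r) (hc : memHs r c) :
    (Summable fun k : ℤ => bracket q k * ‖c k‖) ∧
      wienerNorm q c ≤ √(∑' k : ℤ, bracket (2 * q - r) k) * hsNorm r c := by
  have hsplit (k : ℤ) : bracket ((2 * q - r) / 2) k * (bracket (r / 2) k * ‖c k‖) =
      bracket q k * ‖c k‖ := by
    rw [← mul_assoc, ← bracket_add]
    ring_nf
  have h := summable_mul_and_tsum_mul_le_sqrt_mul_sqrt
    (f := fun k : ℤ => bracket ((2 * q - r) / 2) k) (g := fun k => bracket (r / 2) k * ‖c k‖)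
    (fun k => bracket_nonneg _ _) (fun k => mul_nonneg (bracket_nonneg _ _) (norm_nonneg _))
    (by simpa only [bracket_half_sq] using summable_bracket_int (by linarith))
    (by simpa only [sq_bracket_half_mul_norm, memHs] using hc)
  simpa only [hsplit, bracket_half_sq, sq_bracket_half_mul_norm, wienerNorm, hsNorm] using h

lemma mult_comm (m n : ℤ → ℝ) (c : FC) : mult m (mult n c) = mult n (mult m c) :=
  funext fun _ => mul_left_comm _ _ _

lemma mult_neg (m : ℤ → ℝ) (c : FC) : mult m (-c) = -mult m c :=
  funext fun _ => mul_neg _ _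

lemma T_apply (ε : ℝ) (c : FC) (k : ℤ) : T ε c k = (bracket (-1) (ε * k) : ℂ) * c k := by
  rw [bracket_neg_one, mul_pow]
  rfl

lemma norm_T_apply (ε : ℝ) (c : FC) (k : ℤ) : ‖T ε c k‖ = bracket (-1) (ε * k) * ‖c k‖ := by
  rw [T_apply, norm_mul, Complex.norm_of_nonneg (bracket_nonneg _ _)]

lemma memHs_T (hc : memHs q c) (ε : ℝ) : memHs q (T ε c) := by
  refine Summable.of_nonneg_of_le (fun k => mul_nonneg (bracket_nonneg _ _) (sq_nonneg _))
    (fun k => mul_le_mul_of_nonneg_left ?_ (bracket_nonneg _ _)) hc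
  rw [norm_T_apply]
  exact pow_le_pow_left₀ (mul_nonneg (bracket_nonneg _ _) (norm_nonneg _))
    (mul_le_of_le_one_left (norm_nonneg _) (bracket_le_one _ (by norm_num))) 2

lemma wt_eq_wt_sub_two_mul (s : ℝ) (k : ℤ) : wt s k = wt (s - 2) k * (1 + (k : ℝ) ^ 2) ^ 2 := by
  rw [wt_eq_bracket, wt_eq_bracket, ← bracket_one, sq, ← bracket_add, ← bracket_add]
  congr 1
  ring

lemma wt_mul_sq_norm_helm (s : ℝ) (c : FC) (k : ℤ) :
    wt (s - 2) k * ‖helm c k‖ ^ 2 = wt s k * ‖c k‖ ^ 2 := by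
  rw [helm, mult, norm_mul, Complex.norm_of_nonneg (by positivity), wt_eq_wt_sub_two_mul s]
  ring

lemma memHs_helm (s : ℝ) (c : FC) : memHs (s - 2) (helm c) ↔ memHs s c := by
  simp only [memHs, wt_mul_sq_norm_helm]

lemma hsNorm_helm (s : ℝ) (c : FC) : hsNorm (s - 2) (helm c) = hsNorm s c := by
  simp only [hsNorm, wt_mul_sq_norm_helm]

lemma hsInner_neg_left (s : ℝ) (c d : FC) : hsInner s (-c) d = -hsInner s c d := by
  simp only [hsInner, Pi.neg_apply, neg_mul, mul_neg, tsum_neg, Complex.neg_re]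

lemma hsInner_helmInv_left (s : ℝ) (c d : FC) :
    hsInner s (helmInv c) d = hsInner (s - 2) c (helm d) := by
  have hne (k : ℤ) : (1 + (k : ℂ) ^ 2) ≠ 0 := by
    exact_mod_cast (by positivity : (1 + (k : ℝ) ^ 2) ≠ 0)
  unfold hsInner
  congr 2
  funext k
  rw [wt_eq_wt_sub_two_mul s k]
  simp only [helm, helmInv, mult, map_mul, Complex.conj_ofReal]
  push_cast
  field_simp [hne k]

end SobolevSpaces

section LieDerivative

variable {p q ε : ℝ} {ξ v : FC}

lemma norm_D1_le (c : FC) (k : ℤ) : ‖D1 c k‖ ≤ bracket (1 / 2) k * ‖c k‖ := by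
  rw [D1, norm_mul, norm_mul, Complex.norm_I, one_mul, Complex.norm_intCast]
  exact mul_le_mul_of_nonneg_right (abs_le_bracket_half _) (norm_nonneg _)

lemma bracket_mul_norm_D1_le (p : ℝ) (c : FC) (k : ℤ) :
    bracket p k * ‖D1 c k‖ ≤ bracket (p + 1 / 2) k * ‖c k‖ := by
  rw [bracket_add, mul_assoc]
  exact mul_le_mul_of_nonneg_left (norm_D1_le c k) (bracket_nonneg _ _)

lemma summable_mul_shift (hp : 0 ≤ p) (hξ : Summable fun k : ℤ => bracket p k * ‖ξ k‖)
    {M : ℝ} (hv : ∀ k : ℤ, ‖v k‖ ≤ M * bracket p k) (k : ℤ) :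
    Summable fun j => ξ j * v (k - j) := by
  have hM : 0 ≤ M := nonneg_of_mul_nonneg_left ((norm_nonneg _).trans (hv 0)) (bracket_pos _ _)
  refine Summable.of_norm_bounded (hξ.mul_left (M * (2 ^ p * bracket p k))) fun j => ?_
  have hkj : bracket p (k - j : ℤ) ≤ 2 ^ p * (bracket p k * bracket p j) :=
    bracket_le_of_abs_sub_le_of_nonneg hp (by simp)
  calc ‖ξ j * v (k - j)‖ = ‖v (k - j)‖ * ‖ξ j‖ := by rw [norm_mul, mul_comm]
    _ ≤ M * (2 ^ p * (bracket p k * bracket p j)) * ‖ξ j‖ :=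
        mul_le_mul_of_nonneg_right
          ((hv _).trans (mul_le_mul_of_nonneg_left hkj hM)) (norm_nonneg _)
    _ = _ := by ring

lemma lie_apply (hp : 0 ≤ p) (hξ : Summable fun k : ℤ => bracket (p + 1 / 2) k * ‖ξ k‖)
    {M : ℝ} (hv : ∀ k : ℤ, ‖v k‖ ≤ M * bracket p k) (k : ℤ) :
    lie ξ v k = ∑' j : ℤ, Complex.I * k * (ξ j * v (k - j)) := by
  have hD1v (k : ℤ) : ‖D1 v k‖ ≤ M * bracket (p + 1 / 2) k :=
    calc ‖D1 v k‖ ≤ bracket (1 / 2) k * (M * bracket p k) :=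
          (norm_D1_le v k).trans (mul_le_mul_of_nonneg_left (hv k) (bracket_nonneg _ _))
      _ = M * bracket (p + 1 / 2) k := by
          rw [bracket_add]
          ring
  have hD1ξ : Summable fun k : ℤ => bracket p k * ‖D1 ξ k‖ :=
    hξ.of_nonneg_of_le (fun k => mul_nonneg (bracket_nonneg _ _) (norm_nonneg _))
      (bracket_mul_norm_D1_le p ξ)
  calc lie ξ v k = ∑' j, ξ j * D1 v (k - j) + ∑' j, D1 ξ j * v (k - j) := rfl
    _ = ∑' j, (ξ j * D1 v (k - j) + D1 ξ j * v (k - j)) :=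
        ((summable_mul_shift (by linarith) hξ hD1v k).tsum_add
          (summable_mul_shift hp hD1ξ hv k)).symm
    _ = ∑' j, Complex.I * k * (ξ j * v (k - j)) := tsum_congr fun j => by
        simp only [D1]
        push_cast
        ring

/-- The terms `i a(k,j) ξ̂(j) v̂(k-j) conj v̂(k)`, indexed by `(k, j)`, of the quadratic form in `v`
with real symbol `a`. The energies of `lie ξ v` and their symmetrisations are sums of this kind. -/
def quadTerm (a : ℤ × ℤ → ℝ) (ξ v : FC) (p : ℤ × ℤ) : ℂ :=
  a p * (Complex.I * (ξ p.2 * v (p.1 - p.2) * (starRingEnd ℂ) (v p.1)))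

lemma norm_quadTerm (a : ℤ × ℤ → ℝ) (ξ v : FC) (p : ℤ × ℤ) :
    ‖quadTerm a ξ v p‖ = |a p| * (‖ξ p.2‖ * ‖v (p.1 - p.2)‖ * ‖v p.1‖) := by
  simp only [quadTerm, norm_mul, Complex.norm_I, one_mul, Complex.norm_real, Real.norm_eq_abs,
    RCLike.norm_conj]

lemma summable_quadTerm_and_norm_tsum_le {a : ℤ × ℤ → ℝ} {C : ℝ} (hC : 0 ≤ C)
    (ha : ∀ k j : ℤ, |a (k, j)| ≤ C * (bracket p j * bracket (q / 2) (k - j : ℤ)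
      * (bracket (q / 2) k * bracket (-1) (ε * k))))
    (hξ : Summable fun k : ℤ => bracket p k * ‖ξ k‖) (hv : memHs q v) :
    Summable (quadTerm a ξ v) ∧
      ‖∑' x, quadTerm a ξ v x‖ ≤ C * (wienerNorm p ξ * (hsNorm q v * hsNorm q (T ε v))) := by
  have hnonneg (r : ℝ) (c : FC) : 0 ≤ fun k : ℤ => bracket r k * ‖c k‖ :=
    fun k => mul_nonneg (bracket_nonneg _ _) (norm_nonneg _)
  obtain ⟨hsum, hle⟩ := summable_and_tsum_mul_shift_mul_le
    (hnonneg p ξ) (hnonneg (q / 2) v) (hnonneg (q / 2) (T ε v)) hξ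
    (by simpa only [sq_bracket_half_mul_norm, memHs] using hv)
    (by simpa only [sq_bracket_half_mul_norm, memHs] using memHs_T hv ε)
  simp only [sq_bracket_half_mul_norm] at hle
  have hbound : ∀ x : ℤ × ℤ, ‖quadTerm a ξ v x‖ ≤ C * (bracket p x.2 * ‖ξ x.2‖ *
      (bracket (q / 2) (x.1 - x.2 : ℤ) * ‖v (x.1 - x.2)‖
        * (bracket (q / 2) x.1 * ‖T ε v x.1‖))) := by
    rintro ⟨k, j⟩
    rw [norm_quadTerm, norm_T_apply]
    exact (mul_le_mul_of_nonneg_right (ha k j) (by positivity)).trans_eq (by ring)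
  refine ⟨Summable.of_norm_bounded (hsum.mul_left C) hbound, ?_⟩
  refine (tsum_of_norm_bounded (hsum.mul_left C).hasSum hbound).trans ?_
  rw [tsum_mul_left]
  exact mul_le_mul_of_nonneg_left hle hC

/-- The involution `(k, j) ↦ (k - j, -j)` of `ℤ × ℤ`. It exchanges the frequencies `k` and `k - j`
of the two factors `v` in `quadTerm`. -/
def modeSwap : ℤ × ℤ ≃ ℤ × ℤ :=
  Function.Involutive.toPerm (fun p => (p.1 - p.2, -p.2)) fun p => by simp

lemma modeSwap_apply (p : ℤ × ℤ) : modeSwap p = (p.1 - p.2, -p.2) := rfl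

lemma quadTerm_add_conj_quadTerm_modeSwap (φ : ℤ → ℝ) (hξ : isReal ξ) (v : FC) (p : ℤ × ℤ) :
    quadTerm (fun p => φ p.1) ξ v p
        + (starRingEnd ℂ) (quadTerm (fun p => φ p.1) ξ v (modeSwap p)) =
      quadTerm (fun p => φ p.1 - φ (p.1 - p.2)) ξ v p := by
  simp only [quadTerm, modeSwap_apply, hξ p.2, map_mul, Complex.conj_I,
    Complex.conj_ofReal, Complex.conj_conj, sub_neg_eq_add, sub_add_cancel]
  push_cast
  ring

/-- Exchanging the two factors `v` replaces the symbol by its increments: this is the cancellation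
that saves one derivative. -/
lemma two_mul_re_tsum_quadTerm {φ : ℤ → ℝ} (hξ : isReal ξ)
    (hsum : Summable (quadTerm (fun p => φ p.1) ξ v)) :
    2 * (∑' p, quadTerm (fun p => φ p.1) ξ v p).re =
      (∑' p, quadTerm (fun p => φ p.1 - φ (p.1 - p.2)) ξ v p).re := by
  have hswap : Summable fun p =>
      (starRingEnd ℂ) (quadTerm (fun p => φ p.1) ξ v (modeSwap p)) :=
    Complex.summable_conj.mpr (modeSwap.summable_iff.mpr hsum)
  simp only [← quadTerm_add_conj_quadTerm_modeSwap φ hξ]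
  rw [hsum.tsum_add hswap, Complex.add_re, ← Complex.conj_tsum, Complex.conj_re,
    modeSwap.tsum_eq (quadTerm (fun p => φ p.1) ξ v)]
  ring

lemma hsInner_T_lie_eq_re_tsum (hp : |q| / 2 + 1 / 2 ≤ p)
    (hξ : Summable fun k : ℤ => bracket p k * ‖ξ k‖) (hv : memHs q v)
    (hsum : Summable (quadTerm (fun x => energySymbol q ε x.1) ξ v)) :
    hsInner q (T ε (lie ξ v)) (T ε v) =
      (∑' x, quadTerm (fun x => energySymbol q ε x.1) ξ v x).re := by
  have hξ' : Summable fun k : ℤ => bracket (|q| / 2 + 1 / 2) k * ‖ξ k‖ :=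
    hξ.of_nonneg_of_le (fun k => mul_nonneg (bracket_nonneg _ _) (norm_nonneg _))
      fun k => mul_le_mul_of_nonneg_right (bracket_le_bracket _ hp) (norm_nonneg _)
  rw [hsum.tsum_prod, hsInner]
  congr 1
  refine tsum_congr fun k => ?_
  rw [T_apply, T_apply, lie_apply (by positivity) hξ' (norm_le_hsNorm_mul_bracket hv) k,
    ← tsum_mul_left, ← tsum_mul_right, ← tsum_mul_left]
  refine tsum_congr fun j => ?_
  rw [quadTerm, energySymbol, show (-2 : ℝ) = -1 + -1 by norm_num, bracket_add, wt_eq_bracket]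
  simp only [map_mul, Complex.conj_ofReal]
  push_cast
  ring

lemma abs_hsInner_T_lie_le (hε : ε ∈ Set.Ioo 0 1) (hξreal : isReal ξ)
    (hξ : Summable fun k : ℤ => bracket (|q| + 3 / 2) k * ‖ξ k‖) (hv : memHs q v) :
    |hsInner q (T ε (lie ξ v)) (T ε v)| ≤
      (5 + 2 * |q|) * 2 ^ |q| *
        (wienerNorm (|q| + 3 / 2) ξ * (hsNorm q v * hsNorm q (T ε v))) := by
  have hεle : |ε| ≤ 1 := abs_le.mpr ⟨by linarith [hε.1], hε.2.le⟩
  have hε₀ := inv_nonneg.mpr hε.1.le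
  have hsum : Summable (quadTerm (fun x => energySymbol q ε x.1) ξ v) :=
    (summable_quadTerm_and_norm_tsum_le (C := ε⁻¹ * 2 ^ |q / 2|) (by positivity)
      (fun k j => by simpa using abs_energySymbol_le hε.1 (k : ℝ) (k - j : ℤ)) hξ hv).1
  have hsymm := (summable_quadTerm_and_norm_tsum_le
    (a := fun x => energySymbol q ε x.1 - energySymbol q ε (x.1 - x.2 : ℤ))
    (C := (5 + 2 * |q|) * (2 * 2 ^ |q|)) (by positivity)
    (fun k j => by simpa using abs_energySymbol_sub_le hεle (k : ℝ) (k - j : ℤ)) hξ hv).2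
  have htwice : 2 * |hsInner q (T ε (lie ξ v)) (T ε v)| ≤ (5 + 2 * |q|) * (2 * 2 ^ |q|) *
      (wienerNorm (|q| + 3 / 2) ξ * (hsNorm q v * hsNorm q (T ε v))) := by
    rw [hsInner_T_lie_eq_re_tsum (by linarith [abs_nonneg q]) hξ hv hsum, ← abs_two, ← abs_mul,
      abs_two, two_mul_re_tsum_quadTerm (φ := fun k => energySymbol q ε k) hξreal hsum]
    exact (Complex.abs_re_le_norm _).trans hsymm
  linarith

lemma exists_abs_hsInner_T_lie_le {σ : ℝ} (hσ : 2 * |q| + 7 / 2 < σ) :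
    ∃ C, 0 ≤ C ∧ ∀ ε ∈ Set.Ioo (0 : ℝ) 1, ∀ ξ v : FC, memHs σ ξ → isReal ξ → memHs q v →
      |hsInner q (T ε (lie ξ v)) (T ε v)| ≤ C * hsNorm σ ξ * (hsNorm q v * hsNorm q (T ε v)) := by
  refine ⟨(5 + 2 * |q|) * 2 ^ |q| * √(∑' k : ℤ, bracket (2 * (|q| + 3 / 2) - σ) k),
    by positivity, fun ε hε ξ v hξ hξreal hv => ?_⟩
  obtain ⟨hsum, hle⟩ := summable_and_wienerNorm_le (q := |q| + 3 / 2) (by linarith) hξ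
  refine (abs_hsInner_T_lie_le hε hξreal hsum hv).trans ?_
  rw [mul_assoc (_ * _) (√_), mul_assoc (_ * _)]
  exact mul_le_mul_of_nonneg_left (mul_le_mul_of_nonneg_right hle
    (mul_nonneg (hsNorm_nonneg _ _) (hsNorm_nonneg _ _))) (by positivity)

end LieDerivative

section Diffusion

lemma pairNorm_sq (s₁ s₂ : ℝ) (c d : FC) :
    pairNorm s₁ s₂ c d ^ 2 = hsNorm s₁ c ^ 2 + hsNorm s₂ d ^ 2 :=
  Real.sq_sqrt (by positivity)

lemma hsInner_T_hCH1 (s ε : ℝ) (ξ : ℕ → FC) (k : ℕ) (u : FC) :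
    hsInner s (T ε (hCH1 ξ k u)) (T ε u) =
      -hsInner (s - 2) (T ε (lie (ξ k) (helm u))) (T ε (helm u)) := by
  have hT : T ε (hCH1 ξ k u) = -helmInv (T ε (lie (ξ k) (helm u))) := by
    rw [hCH1, T, helmInv, mult_neg, mult_comm]
  rw [hT, hsInner_neg_left, hsInner_helmInv_left, T, helm, mult_comm]

lemma hsInner_T_hCH2 (s ε : ℝ) (ξ : ℕ → FC) (k : ℕ) (η : FC) :
    hsInner s (T ε (hCH2 ξ k η)) (T ε η) = -hsInner s (T ε (lie (ξ k) η)) (T ε η) := by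
  rw [hCH2, T, mult_neg, hsInner_neg_left]

lemma hsNorm_T_helm (s ε : ℝ) (u : FC) :
    hsNorm (s - 2) (T ε (helm u)) = hsNorm s (T ε u) := by
  rw [← hsNorm_helm s, T, helm, mult_comm]

lemma add_mul_sq_le_of_cauchy_schwarz (a b c d : ℝ) :
    (a * b + c * d) ^ 2 ≤ (a ^ 2 + c ^ 2) * (b ^ 2 + d ^ 2) := by
  linarith [sq_nonneg (a * d - b * c)]

lemma exists_sq_pairInner_T_hCH_le {s σ : ℝ} (hσ : 2 * max |s - 1| |s - 2| + 7 / 2 < σ) :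
    ∃ C : ℝ, ∀ ε ∈ Set.Ioo (0 : ℝ) 1, ∀ (ξ : ℕ → FC) (k : ℕ) (u η : FC),
      memHs σ (ξ k) → isReal (ξ k) → memHs s u → memHs (s - 1) η →
      |pairInner s (s - 1) (T ε (hCH1 ξ k u)) (T ε (hCH2 ξ k η)) (T ε u) (T ε η)| ^ 2 ≤
        C ^ 2 * hsNorm σ (ξ k) ^ 2 * ((hsNorm s u ^ 2 + hsNorm (s - 1) η ^ 2)
          * pairNorm s (s - 1) (T ε u) (T ε η) ^ 2) := by
  obtain ⟨C₁, hC₁, h₁⟩ := exists_abs_hsInner_T_lie_le (q := s - 2) (σ := σ)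
    (by linarith [le_max_right |s - 1| |s - 2|])
  obtain ⟨C₂, hC₂, h₂⟩ := exists_abs_hsInner_T_lie_le (q := s - 1) (σ := σ)
    (by linarith [le_max_left |s - 1| |s - 2|])
  refine ⟨C₁ + C₂, fun ε hε ξ k u η hξ hξreal hu hη => ?_⟩
  have hu' := h₁ ε hε (ξ k) (helm u) hξ hξreal ((memHs_helm s u).mpr hu)
  have hη' := h₂ ε hε (ξ k) η hξ hξreal hη
  rw [hsNorm_helm, hsNorm_T_helm] at hu'
  have hu₀ := mul_nonneg (hsNorm_nonneg σ (ξ k))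
    (mul_nonneg (hsNorm_nonneg s u) (hsNorm_nonneg s (T ε u)))
  have hη₀ := mul_nonneg (hsNorm_nonneg σ (ξ k))
    (mul_nonneg (hsNorm_nonneg (s - 1) η) (hsNorm_nonneg (s - 1) (T ε η)))
  have habs : |pairInner s (s - 1) (T ε (hCH1 ξ k u)) (T ε (hCH2 ξ k η)) (T ε u) (T ε η)| ≤
      (C₁ + C₂) * hsNorm σ (ξ k) * (hsNorm s u * hsNorm s (T ε u)
        + hsNorm (s - 1) η * hsNorm (s - 1) (T ε η)) := by
    rw [pairInner, hsInner_T_hCH1, hsInner_T_hCH2]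
    refine (abs_add_le _ _).trans ?_
    rw [abs_neg, abs_neg]
    linarith [mul_nonneg hC₂ hu₀, mul_nonneg hC₁ hη₀]
  rw [pairNorm_sq, ← mul_pow]
  refine (pow_le_pow_left₀ (abs_nonneg _) habs 2).trans ?_
  rw [mul_pow]
  exact mul_le_mul_of_nonneg_left (add_mul_sq_le_of_cauchy_schwarz _ _ _ _) (sq_nonneg _)

end Diffusion

end FC

theorem statement18_general {s σ : ℝ} (hσ : 2 * max |s - 1| |s - 2| + 7 / 2 < σ) (ξ : ℕ → FC)
    (hξmem : ∀ k, FC.memHs σ (ξ k)) (hξreal : ∀ k, FC.isReal (ξ k))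
    (hξsum : Summable fun k => FC.hsNorm σ (ξ k) ^ 2) :
    ∃ C > (0 : ℝ), ∀ ε ∈ Set.Ioo (0 : ℝ) 1, ∀ u η : FC, FC.memHs s u → FC.memHs (s - 1) η →
      Summable (fun k : ℕ =>
        |FC.pairInner s (s - 1)
            (FC.T ε (hCH1 ξ k u)) (FC.T ε (hCH2 ξ k η)) (FC.T ε u) (FC.T ε η)| ^ 2) ∧
      ∑' k : ℕ,
          |FC.pairInner s (s - 1)
            (FC.T ε (hCH1 ξ k u)) (FC.T ε (hCH2 ξ k η)) (FC.T ε u) (FC.T ε η)| ^ 2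
        ≤ C * (FC.hsNorm s u ^ 2 + FC.hsNorm (s - 1) η ^ 2)
            * FC.pairNorm s (s - 1) (FC.T ε u) (FC.T ε η) ^ 2 := by
  obtain ⟨C, hC⟩ := FC.exists_sq_pairInner_T_hCH_le hσ
  set S := ∑' k, C ^ 2 * FC.hsNorm σ (ξ k) ^ 2
  have hS : 0 ≤ S := tsum_nonneg fun k => by positivity
  refine ⟨S + 1, add_pos_of_nonneg_of_pos hS one_pos, fun ε hε u η hu hη => ?_⟩
  set E := (FC.hsNorm s u ^ 2 + FC.hsNorm (s - 1) η ^ 2)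
    * FC.pairNorm s (s - 1) (FC.T ε u) (FC.T ε η) ^ 2 with hE
  have hterm (k : ℕ) := hC ε hε ξ k u η (hξmem k) (hξreal k) hu hη
  have hmajorant : Summable fun k => C ^ 2 * FC.hsNorm σ (ξ k) ^ 2 * E :=
    (hξsum.mul_left _).mul_right E
  have hsum := hmajorant.of_nonneg_of_le (fun k => sq_nonneg _) hterm
  refine ⟨hsum, (hsum.tsum_le_tsum hterm hmajorant).trans ?_⟩
  rw [tsum_mul_right, mul_assoc, ← hE]
  exact mul_le_mul_of_nonneg_right (by linarith) (by positivity)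

/-- Let `s > 11/2` and `Σ_k ‖ξ_k‖_{H^σ} < ∞` for all `σ ≥ 0`.  With
`h^k(X) = (−(1−∂ₓ²)⁻¹𝓛_{ξ_k}(1−∂ₓ²)u, −𝓛_{ξ_k}η)` and `T̃_ε = (1−ε²∂ₓ²)⁻¹` acting
componentwise, there is `C > 0`, independent of `ε`, such that for all `ε ∈ (0,1)` and
`X = (u,η) ∈ H^s × H^{s-1}`:
`Σ_k |(T̃_ε h^k(X), T̃_ε X)_{H^s×H^{s-1}}|²`
`≤ C (‖u‖²_{H^s} + ‖η‖²_{H^{s-1}}) ‖T̃_ε X‖²_{H^s×H^{s-1}}`. -/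
theorem statement18 (s : ℝ) (hs : 11 / 2 < s) (ξ : ℕ → FC)
    (hξmem : ∀ σ : ℝ, 0 ≤ σ → ∀ k : ℕ, FC.memHs σ (ξ k))
    (hξreal : ∀ k : ℕ, FC.isReal (ξ k))
    (hξsum : ∀ σ : ℝ, 0 ≤ σ → Summable fun k : ℕ => FC.hsNorm σ (ξ k)) :
    ∃ C > (0 : ℝ), ∀ ε : ℝ, ε ∈ Set.Ioo (0 : ℝ) 1 → ∀ u η : FC,
      FC.memHs s u → FC.memHs (s - 1) η → FC.isReal u → FC.isReal η →
      Summable (fun k : ℕ =>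
        |FC.pairInner s (s - 1)
            (FC.T ε (hCH1 ξ k u)) (FC.T ε (hCH2 ξ k η)) (FC.T ε u) (FC.T ε η)| ^ 2) ∧
      ∑' k : ℕ,
          |FC.pairInner s (s - 1)
            (FC.T ε (hCH1 ξ k u)) (FC.T ε (hCH2 ξ k η)) (FC.T ε u) (FC.T ε η)| ^ 2
        ≤ C * (FC.hsNorm s u ^ 2 + FC.hsNorm (s - 1) η ^ 2)
            * FC.pairNorm s (s - 1) (FC.T ε u) (FC.T ε η) ^ 2 := by
  obtain ⟨C, hC, h⟩ := statement18_general (s := s) (σ := 2 * max |s - 1| |s - 2| + 4)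
    (by linarith) ξ (hξmem _ (by positivity)) hξreal
    (FC.summable_sq_of_summable_of_nonneg (hξsum _ (by positivity))
      fun k => FC.hsNorm_nonneg _ (ξ k))
  exact ⟨C, hC, fun ε hε u η hu hη _ _ => h ε hε u η hu hη⟩
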